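/- arXiv:1504.01681 — 2 statements merged into one kernel-verified Lean document; each statement's English description precedes it below -/
import Mathlib

section
/- The number of self-conjugate partitions that are simultaneously s-cores and t-cores, for coprime positive integers s and t, is binomial(⌊s/2⌋ + ⌊t/2⌋, ⌊s/2⌋). -/
/-- A partition: a weakly decreasing, eventually-zero sequence of naturals
(0-indexed: `f i` is the `(i+1)`-th part). -/
structure Partn where
  f : ℕ → ℕ
  antitone : Antitone f
  eventually_zero : ∃ N, ∀ i, N ≤ i → f i = 0

/-- The beta-set `B(λ) = {λ_i - i : i ≥ 1}`. -/
def betaSet (p : Partn) : Set ℤ := {b | ∃ i : ℕ, b = (p.f i : ℤ) - (i + 1)}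

/-- `conjCount p j` is the `(j+1)`-th part of the conjugate partition. -/
noncomputable def conjCount (p : Partn) (j : ℕ) : ℕ := Set.ncard {i : ℕ | j + 1 ≤ p.f i}

/-- Hook length of the cell in row `r+1`, column `c+1` (1-indexed formula
`1 + (λ_r - r) + (λ'_c - c)`). -/
noncomputable def hookLen (p : Partn) (r c : ℕ) : ℤ :=
  1 + ((p.f r : ℤ) - (r + 1)) + ((conjCount p c : ℤ) - (c + 1))

/-- `p` is an `s`-core: no hook length is divisible by `s`. -/
def IsCore (s : ℕ) (p : Partn) : Prop :=
  ∀ r c : ℕ, c < p.f r → ¬ ((s : ℤ) ∣ hookLen p r c)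

/-- `p` is self-conjugate. -/
def SelfConj (p : Partn) : Prop := ∀ j, p.f j = conjCount p j

/-- The `s`-set of an `s`-core: `S(λ) = (B(λ)+s) \ B(λ)`. -/
def sSet (s : ℕ) (p : Partn) : Set ℤ := {x | x - s ∈ betaSet p ∧ x ∉ betaSet p}

/-- An `s`-set: `s` integers, pairwise incongruent mod `s`, summing to `C(s,2)`. -/
def IsSSet (s : ℕ) (X : Set ℤ) : Prop :=
  X.ncard = s ∧ (∀ a ∈ X, ∀ b ∈ X, a ≠ b → ¬ ((s : ℤ) ∣ (a - b))) ∧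
    (∑ᶠ x ∈ X, x) = (s.choose 2 : ℤ)

/-- The affine symmetric group `W̃_s`, as a set of permutations of `ℤ`:
`w(m+s) = w(m)+s` and `w(0)+⋯+w(s-1) = C(s,2)`. -/
def AffSymSet (s : ℕ) : Set (Equiv.Perm ℤ) :=
  {w | (∀ m : ℤ, w (m + s) = w m + s) ∧
    (∑ i ∈ Finset.range s, w (i : ℤ)) = (s.choose 2 : ℤ)}

/-- The underlying function of the Coxeter generator `w_i` of `W̃_s`, where `a = i - 1`:
swaps `m` and `m+1` whenever `m ≡ i - 1 (mod s)`. -/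
def genFun (s : ℕ) (a : ℤ) : ℤ → ℤ := fun m =>
  if (s : ℤ) ∣ (m - a) then m + 1 else if (s : ℤ) ∣ (m - a - 1) then m - 1 else m

lemma genFun_involutive (s : ℕ) (hs : 2 ≤ s) (a : ℤ) :
    Function.Involutive (genFun s a) := by
  have h1 : ¬ ((s : ℤ) ∣ 1) := by
    intro h
    have := Int.le_of_dvd one_pos h
    omega
  intro m
  unfold genFun
  by_cases hA : (s : ℤ) ∣ (m - a)
  · rw [if_pos hA]
    have hB : ¬ (s : ℤ) ∣ (m + 1 - a) := by
      intro h
      have := dvd_sub h hA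
      rw [show m + 1 - a - (m - a) = 1 by ring] at this
      exact h1 this
    rw [if_neg hB, if_pos (by rw [show m + 1 - a - 1 = m - a by ring]; exact hA)]
    ring
  · rw [if_neg hA]
    by_cases hB : (s : ℤ) ∣ (m - a - 1)
    · rw [if_pos hB, if_pos (by rw [show m - 1 - a = m - a - 1 by ring]; exact hB)]
      ring
    · rw [if_neg hB, if_neg hA, if_neg hB]

/-- The Coxeter generator `w_i` of `W̃_s`, where `a = i - 1`. -/
def genPerm (s : ℕ) (hs : 2 ≤ s) (a : ℤ) : Equiv.Perm ℤ :=
  (genFun_involutive s hs a).toPerm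

/-- The constant `c = (s-1)(t-1)/2`. -/
def lc (s t : ℕ) : ℤ := (((s : ℤ) - 1) * ((t : ℤ) - 1)) / 2

/-- The image `ẘ_i` of the generator `w_i` under the level `t` action on `ℤ`:
`m ↦ m + t` if `m ≡ (i-1)t - c (mod s)`, `m ↦ m - t` if `m ≡ it - c (mod s)`,
`m ↦ m` otherwise. -/
def levelGenFun (s t : ℕ) (i : ℤ) : ℤ → ℤ := fun m =>
  if (s : ℤ) ∣ (m - ((i - 1) * t - lc s t)) then m + t
  else if (s : ℤ) ∣ (m - (i * t - lc s t)) then m - t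
  else m

/-- `Φ` is (the restriction to `W̃_s` of) the level `t` action of `W̃_s` on `ℤ`:
a multiplicative map on `W̃_s` sending each generator `w_i` to `ẘ_i`. -/
def IsLevelTAction (s t : ℕ) (hs : 2 ≤ s) (Φ : Equiv.Perm ℤ → Equiv.Perm ℤ) : Prop :=
  (∀ w v : Equiv.Perm ℤ, w ∈ AffSymSet s → v ∈ AffSymSet s → Φ (w * v) = Φ w * Φ v) ∧
  (∀ i m : ℤ, Φ (genPerm s hs (i - 1)) m = levelGenFun s t i m)

/-- Removing a rim hook of length `t`, in terms of beta-sets: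
`μ` is obtained from `λ` by removing a rim `t`-hook. -/
def RemoveHook (t : ℕ) (p q : Partn) : Prop :=
  ∃ b ∈ betaSet p, b - t ∉ betaSet p ∧ betaSet q = insert (b - t) (betaSet p \ {b})

lemma lt_conjCount_iff (p : Partn) (r c : ℕ) : r < conjCount p c ↔ c < p.f r := by
  classical
  have hex : ∃ n, p.f n ≤ c := by
    obtain ⟨N, hN⟩ := p.eventually_zero
    exact ⟨N, by rw [hN N le_rfl]; exact Nat.zero_le c⟩
  have hset : {i : ℕ | c + 1 ≤ p.f i} = Set.Iio (Nat.find hex) := by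
    ext i
    simp only [Set.mem_ofPred_eq, Set.mem_Iio, Nat.lt_find_iff]
    constructor
    · intro h m hm
      have := p.antitone hm
      omega
    · intro h
      have := h i le_rfl
      omega
  have hcount : conjCount p c = Nat.find hex := by
    rw [conjCount, hset, Set.ncard_eq_toFinset_card']
    simp
  have hr : r ∈ {i : ℕ | c + 1 ≤ p.f i} ↔ r ∈ Set.Iio (Nat.find hex) := by rw [hset]
  rw [hcount]
  exact hr.symm

lemma conjCount_antitone (p : Partn) : Antitone (conjCount p) := by
  intro a b hab
  by_contra! h
  rw [lt_conjCount_iff] at h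
  have := (lt_conjCount_iff p (conjCount p a) a).not.1 (lt_irrefl _)
  omega

lemma strictAnti_of_antitone {f : ℕ → ℕ} (hf : Antitone f) :
    StrictAnti fun i : ℕ => (f i : ℤ) - (i + 1) := by
  intro a b hab
  have := hf hab.le
  simp only
  omega

lemma Partn.ext_f {p q : Partn} (h : p.f = q.f) : p = q := by
  cases p
  cases q
  cases h
  rfl

lemma betaSet_eq_range (p : Partn) :
    betaSet p = Set.range fun i : ℕ => (p.f i : ℤ) - (i + 1) := by
  ext x
  simp only [betaSet, Set.mem_ofPred_eq, Set.mem_range, eq_comm]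

lemma eq_of_range_sub_eq {f g : ℕ → ℕ} (hf : Antitone f) (hg : Antitone g)
    (h : Set.range (fun i : ℕ => (f i : ℤ) - (i + 1)) =
      Set.range (fun i : ℕ => (g i : ℤ) - (i + 1))) : f = g := by
  have hf' : StrictMono (OrderDual.toDual ∘ fun i : ℕ => (f i : ℤ) - (i + 1)) :=
    (strictAnti_of_antitone hf).dual_right
  have hg' : StrictMono (OrderDual.toDual ∘ fun i : ℕ => (g i : ℤ) - (i + 1)) :=
    (strictAnti_of_antitone hg).dual_right
  have := (hf'.range_inj hg').1 (by rw [Set.range_comp, Set.range_comp, h])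
  funext i
  have hi : (f i : ℤ) - (i + 1) = (g i : ℤ) - (i + 1) := congrFun this i
  omega

lemma betaSet_injective : Function.Injective betaSet := by
  intro p q h
  rw [betaSet_eq_range, betaSet_eq_range] at h
  exact Partn.ext_f (eq_of_range_sub_eq p.antitone q.antitone h)

/-- The complement of the beta-set consists of the integers `c - conjCount p c`. -/
lemma notMem_betaSet_iff (p : Partn) (x : ℤ) :
    x ∉ betaSet p ↔ ∃ c : ℕ, x = (c : ℤ) - conjCount p c := by
  classical
  constructor
  · intro hx
    have hex : ∃ r : ℕ, (p.f r : ℤ) - (r + 1) ≤ x := by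
      obtain ⟨N, hN⟩ := p.eventually_zero
      refine ⟨max N x.natAbs, ?_⟩
      rw [hN _ (le_max_left _ _)]
      omega
    obtain ⟨r, hr, hmin⟩ : ∃ r : ℕ, (p.f r : ℤ) - (r + 1) ≤ x ∧
        ∀ m < r, ¬ (p.f m : ℤ) - (m + 1) ≤ x :=
      ⟨Nat.find hex, Nat.find_spec hex, fun m hm => Nat.find_min hex hm⟩
    have hne : x ≠ (p.f r : ℤ) - (r + 1) := fun h => hx ⟨r, h⟩
    obtain ⟨c, hc⟩ : ∃ c : ℕ, (c : ℤ) = x + r := ⟨(x + r).toNat, by omega⟩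
    have h1 : ¬ r < conjCount p c := by
      rw [lt_conjCount_iff]
      omega
    have h2 : ¬ conjCount p c < r := by
      intro hlt
      have h3 := hmin (r - 1) (by omega)
      have h4 : r - 1 < conjCount p c := by
        rw [lt_conjCount_iff]
        omega
      omega
    exact ⟨c, by omega⟩
  · rintro ⟨c, rfl⟩ ⟨r, hr⟩
    have := lt_conjCount_iff p r c
    omega

lemma selfConj_iff (p : Partn) :
    SelfConj p ↔ ∀ x, x ∈ betaSet p ↔ -1 - x ∉ betaSet p := by
  constructor
  · intro h x
    rw [notMem_betaSet_iff]
    constructor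
    · rintro ⟨i, rfl⟩
      exact ⟨i, by rw [← h i]; ring⟩
    · rintro ⟨c, hc⟩
      exact ⟨c, by rw [h c]; linarith⟩
  · intro h
    refine congrFun (eq_of_range_sub_eq p.antitone (conjCount_antitone p) ?_)
    rw [← betaSet_eq_range]
    ext x
    rw [h x, notMem_betaSet_iff]
    simp only [Set.mem_range]
    constructor
    · rintro ⟨c, hc⟩
      exact ⟨c, by linarith⟩
    · rintro ⟨c, hc⟩
      exact ⟨c, by linarith⟩

lemma sub_mul_mem {B : Set ℤ} {s : ℤ} (h : ∀ x ∈ B, x - s ∈ B) {x : ℤ} (hx : x ∈ B) (n : ℕ) :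
    x - s * n ∈ B := by
  induction n with
  | zero => simpa using hx
  | succ n ih =>
    have := h _ ih
    rwa [show x - s * ((n + 1 : ℕ) : ℤ) = x - s * n - s by push_cast; ring]

lemma isCore_iff {s : ℕ} (hs : 0 < s) (p : Partn) :
    IsCore s p ↔ ∀ x ∈ betaSet p, x - s ∈ betaSet p := by
  constructor
  · rintro h x ⟨r, rfl⟩
    by_contra hx
    obtain ⟨c, hc⟩ := (notMem_betaSet_iff p _).1 hx
    have hrc := lt_conjCount_iff p r c
    refine h r c (by omega) ⟨1, ?_⟩
    rw [hookLen]
    linarith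
  · rintro h r c hrc ⟨k, hk⟩
    have hlt := (lt_conjCount_iff p r c).2 hrc
    have hpos : 0 < (s : ℤ) * k := by
      rw [← hk, hookLen]
      omega
    have hk0 : 0 < k := pos_of_mul_pos_right hpos (by positivity)
    obtain ⟨n, rfl⟩ := Int.eq_ofNat_of_zero_le hk0.le
    refine (notMem_betaSet_iff p _).2 ⟨c, ?_⟩ (sub_mul_mem h ⟨r, rfl⟩ n)
    rw [hookLen] at hk
    linarith

lemma count_two_mul_eq {P : ℕ → Prop} [DecidablePred P] {K : ℕ}
    (h : ∀ n < 2 * K, P n ↔ ¬ P (2 * K - 1 - n)) : Nat.count P (2 * K) = K := by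
  have h1 : ((Finset.range (2 * K)).filter P).card =
      ((Finset.range (2 * K)).filter fun n => ¬ P n).card := by
    refine Finset.card_bij' (fun n _ => 2 * K - 1 - n) (fun n _ => 2 * K - 1 - n) ?_ ?_ ?_ ?_
    · intro n hn
      simp only [Finset.mem_filter, Finset.mem_range] at hn ⊢
      exact ⟨by omega, (h n hn.1).1 hn.2⟩
    · intro n hn
      simp only [Finset.mem_filter, Finset.mem_range] at hn ⊢
      exact ⟨by omega, not_not.1 ((h n hn.1).not.1 hn.2)⟩
    all_goals
      intro n hn
      simp only [Finset.mem_filter, Finset.mem_range] at hn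
      omega
  have h2 := Finset.card_filter_add_card_filter_not (s := Finset.range (2 * K)) P
  rw [← h1, Finset.card_range] at h2
  have h3 : Nat.count P (2 * K) = ((Finset.range (2 * K)).filter P).card :=
    Nat.count_eq_card_filter_range P _
  omega

/-- A set of integers with complement `-1 - B` that contains all sufficiently negative integers
is the beta-set of a partition. -/
lemma exists_betaSet_eq {B : Set ℤ} (hsymm : ∀ x, x ∈ B ↔ -1 - x ∉ B) {K : ℕ}
    (hK : ∀ x : ℤ, x < -K → x ∈ B) : ∃ p : Partn, betaSet p = B := by
  classical
  let P : ℕ → Prop := fun n => (K : ℤ) - 1 - n ∈ B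
  have hP : ∀ n, 2 * K ≤ n → P n := fun n hn => hK _ (by omega)
  have htop : ∀ x ∈ B, x ≤ (K : ℤ) - 1 := by
    intro x hx
    by_contra! hlt
    exact (hsymm x).1 hx (hK _ (by omega))
  have hcount : Nat.count P (2 * K) = K := by
    refine count_two_mul_eq fun n hn => (hsymm _).trans ?_
    rw [show -1 - ((K : ℤ) - 1 - n) = K - 1 - (2 * K - 1 - n : ℕ) by omega]
  have hcount' : ∀ i, Nat.count P (2 * K + i) = K + i := by
    intro i
    induction i with
    | zero => exact hcount
    | succ i ih => rw [← add_assoc, Nat.count_succ, ih, if_pos (hP _ (by omega))]; ring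
  have hnth : ∀ i, Nat.nth P (K + i) = 2 * K + i := fun i => by
    rw [← hcount' i, Nat.nth_count (hP _ (by omega))]
  have hinf : (Set.ofPred P).Infinite :=
    Set.infinite_of_forall_exists_gt fun n => ⟨2 * K + n + 1, hP _ (by omega), by omega⟩
  have hmono := Nat.nth_strictMono hinf
  have hstep : Antitone fun i : ℕ => (K : ℤ) - 1 - Nat.nth P i + (i + 1) := by
    refine antitone_nat_of_succ_le fun i => ?_
    have := hmono (Nat.lt_succ_self i)
    push_cast
    simp only [Nat.succ_eq_add_one] at this
    omega
  have hnonneg : ∀ i : ℕ, 0 ≤ (K : ℤ) - 1 - Nat.nth P i + (i + 1) := by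
    intro i
    have h1 := hstep (Nat.le_add_left i K)
    have h2 := hnth i
    simp only [h2] at h1
    push_cast at h1
    linarith
  refine ⟨⟨fun i => ((K : ℤ) - 1 - Nat.nth P i + (i + 1)).toNat,
    fun a b hab => Int.toNat_le_toNat (hstep hab), K, fun i hi => ?_⟩, ?_⟩
  · obtain ⟨j, rfl⟩ := Nat.exists_eq_add_of_le hi
    rw [hnth]
    push_cast
    omega
  · ext x
    simp only [betaSet, Set.mem_ofPred_eq, Int.toNat_of_nonneg (hnonneg _)]
    constructor
    · rintro ⟨i, rfl⟩
      have : P (Nat.nth P i) := Nat.nth_mem_of_infinite hinf i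
      convert this using 1
      ring
    · intro hx
      have hle := htop x hx
      obtain ⟨n, hn⟩ : ∃ n : ℕ, (n : ℤ) = K - 1 - x := ⟨((K : ℤ) - 1 - x).toNat, by omega⟩
      have hPn : P n := by
        change (K : ℤ) - 1 - n ∈ B
        rwa [hn, sub_sub_cancel]
      refine ⟨Nat.count P n, ?_⟩
      rw [Nat.nth_count hPn]
      omega

/-- The sets of integers closed under subtraction of `s` and of `t` and mapped to their complements
by `x ↦ -1 - x`; these are the beta-sets of the self-conjugate `(s,t)`-cores. -/
def symmIdeals (s t : ℕ) : Set (Set ℤ) :=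
  {B | (∀ x ∈ B, x - s ∈ B) ∧ (∀ x ∈ B, x - t ∈ B) ∧ ∀ x, x ∈ B ↔ -1 - x ∉ B}

lemma exists_sub_eq_add {s t : ℕ} (ht : 0 < t) (hst : Nat.Coprime s t) {d : ℤ}
    (hd : (s : ℤ) * t ≤ d) : ∃ a c : ℕ, d = s * a + t * c := by
  have hgcd : (s : ℤ) * s.gcdA t + t * s.gcdB t = 1 := by
    rw [← Nat.gcd_eq_gcd_ab, hst.gcd_eq_one, Nat.cast_one]
  have ht' : (0 : ℤ) < t := by exact_mod_cast ht
  set u : ℤ := s.gcdA t * d with hu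
  have h1 := Int.emod_nonneg u ht'.ne'
  have h2 := Int.emod_lt_of_pos u ht'
  have h3 := Int.emod_add_mul_ediv u t
  obtain ⟨a, ha⟩ := Int.eq_ofNat_of_zero_le h1
  have h4 : d = s * a + t * (s.gcdB t * d + s * (u / t)) := by
    rw [← ha]
    linear_combination (-d) * hgcd - (s : ℤ) * h3 - (s : ℤ) * hu
  have h5 : (s : ℤ) * a ≤ s * t := mul_le_mul_of_nonneg_left (by omega) (by positivity)
  have h6 : 0 ≤ s.gcdB t * d + s * (u / t) := nonneg_of_mul_nonneg_right (by linarith) ht'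
  obtain ⟨c, hc⟩ := Int.eq_ofNat_of_zero_le h6
  exact ⟨a, c, by rw [h4, hc]⟩

lemma exists_mem_of_symm {B : Set ℤ} (h : ∀ x, x ∈ B ↔ -1 - x ∉ B) : ∃ b, b ∈ B := by
  by_cases h0 : (0 : ℤ) ∈ B
  · exact ⟨0, h0⟩
  · exact ⟨-1, (h _).2 (by simpa using h0)⟩

lemma image_betaSet {s t : ℕ} (hs : 0 < s) (ht : 0 < t) (hst : Nat.Coprime s t) :
    betaSet '' {p | SelfConj p ∧ IsCore s p ∧ IsCore t p} = symmIdeals s t := by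
  ext B
  constructor
  · rintro ⟨p, ⟨h1, h2, h3⟩, rfl⟩
    exact ⟨(isCore_iff hs p).1 h2, (isCore_iff ht p).1 h3, (selfConj_iff p).1 h1⟩
  · rintro ⟨h1, h2, h3⟩
    obtain ⟨b, hb⟩ := exists_mem_of_symm h3
    have hK : ∀ x : ℤ, x < -((s * t + b.natAbs : ℕ) : ℤ) → x ∈ B := by
      intro x hx
      push_cast at hx
      have habs := neg_abs_le b
      obtain ⟨a, c, hac⟩ := exists_sub_eq_add ht hst (show (s : ℤ) * t ≤ b - x by linarith)
      have := sub_mul_mem h2 (sub_mul_mem h1 hb a) c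
      rwa [show b - s * (a : ℤ) - t * c = x by linarith] at this
    obtain ⟨p, rfl⟩ := exists_betaSet_eq h3 hK
    exact ⟨p, ⟨(selfConj_iff p).2 h3, (isCore_iff hs p).2 h1, (isCore_iff ht p).2 h2⟩, rfl⟩

/-- The boundary profiles of symmetric ideals on the lattice of integer combinations
of `s` and `t`. -/
def symmProfiles (s t : ℕ) : Set (ℤ → ℤ) :=
  {g | Monotone g ∧ (∀ i, g (i + t) = g i + s) ∧ ∀ i, g i + g (-1 - i) = 1}

lemma map_add_mul_of_map_add {g : ℤ → ℤ} {s t : ℤ} (h : ∀ i, g (i + t) = g i + s) (i k : ℤ) :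
    g (i + t * k) = g i + s * k := by
  induction k using Int.induction_on with
  | zero => simp
  | succ n ih =>
    rw [show i + t * ((n : ℤ) + 1) = i + t * n + t by ring, h, ih]
    ring
  | pred n ih =>
    have := h (i + t * (-(n : ℤ) - 1))
    rw [show i + t * (-(n : ℤ) - 1) + t = i + t * -n by ring, ih] at this
    linarith

/-- The set of integers lying below the profile `g`, for `s = 2 * h + 1`. -/
def idealOfProfile (h t : ℕ) (g : ℤ → ℤ) : Set ℤ :=
  {x | ∃ i j : ℤ, x = i * (2 * h + 1 : ℕ) - j * t + h ∧ g i ≤ j}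

lemma mem_idealOfProfile {h t : ℕ} (ht : 0 < t) (hst : Nat.Coprime (2 * h + 1) t) {g : ℤ → ℤ}
    (hg : g ∈ symmProfiles (2 * h + 1) t) (i j : ℤ) :
    i * (2 * h + 1 : ℕ) - j * t + h ∈ idealOfProfile h t g ↔ g i ≤ j := by
  constructor
  · rintro ⟨i', j', he, hle⟩
    have hdvd : (t : ℤ) ∣ (2 * h + 1 : ℕ) * (i - i') := ⟨j - j', by linarith⟩
    obtain ⟨k, hk⟩ := (Nat.isCoprime_iff_coprime.2 hst.symm).dvd_of_dvd_mul_left hdvd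
    have hj : j - j' = (2 * h + 1 : ℕ) * k := by
      have ht' : (t : ℤ) ≠ 0 := by exact_mod_cast ht.ne'
      apply mul_left_cancel₀ ht'
      linear_combination -he + ((2 * h + 1 : ℕ) : ℤ) * hk
    have := map_add_mul_of_map_add hg.2.1 i' k
    rw [show i' + t * k = i by linarith] at this
    linarith
  · exact fun hle => ⟨i, j, rfl, hle⟩

lemma exists_lattice_eq {h t : ℕ} (hst : Nat.Coprime (2 * h + 1) t) (x : ℤ) :
    ∃ i j : ℤ, x = i * (2 * h + 1 : ℕ) - j * t + h := by
  have hgcd : ((2 * h + 1 : ℕ) : ℤ) * (2 * h + 1).gcdA t + t * (2 * h + 1).gcdB t = 1 := by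
    rw [← Nat.gcd_eq_gcd_ab, hst.gcd_eq_one, Nat.cast_one]
  exact ⟨(2 * h + 1).gcdA t * (x - h), -((2 * h + 1).gcdB t * (x - h)),
    by linear_combination (h - x) * hgcd⟩

lemma image_idealOfProfile {h t : ℕ} (ht : 0 < t) (hst : Nat.Coprime (2 * h + 1) t) :
    idealOfProfile h t '' symmProfiles (2 * h + 1) t = symmIdeals (2 * h + 1) t := by
  ext B
  constructor
  · rintro ⟨g, hg, rfl⟩
    have hmem := mem_idealOfProfile ht hst hg
    refine ⟨fun x hx => ?_, fun x hx => ?_, fun x => ?_⟩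
    · obtain ⟨i, j, rfl⟩ := exists_lattice_eq hst x
      rw [hmem] at hx
      rw [show i * (2 * h + 1 : ℕ) - j * t + h - (2 * h + 1 : ℕ) =
        (i - 1) * (2 * h + 1 : ℕ) - j * t + h by ring, hmem]
      exact (hg.1 (by omega)).trans hx
    · obtain ⟨i, j, rfl⟩ := exists_lattice_eq hst x
      rw [hmem] at hx
      rw [show i * (2 * h + 1 : ℕ) - j * t + h - t =
        i * (2 * h + 1 : ℕ) - (j + 1) * t + h by ring, hmem]
      omega
    · obtain ⟨i, j, rfl⟩ := exists_lattice_eq hst x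
      rw [show -1 - (i * (2 * h + 1 : ℕ) - j * t + h) =
        (-1 - i) * (2 * h + 1 : ℕ) - (-j) * t + h by push_cast; ring, hmem, hmem]
      have := hg.2.2 i
      omega
  · rintro ⟨h1, h2, h3⟩
    let A : ℤ → ℤ → Prop := fun i j => i * (2 * h + 1 : ℕ) - j * t + h ∈ B
    have hup : ∀ i j j', j ≤ j' → A i j → A i j' := by
      intro i j j' hjj hA
      obtain ⟨n, hn⟩ := Int.eq_ofNat_of_zero_le (sub_nonneg.2 hjj)
      have := sub_mul_mem h2 hA n
      rwa [← hn, show i * (2 * h + 1 : ℕ) - j * t + h - t * (j' - j) =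
        i * (2 * h + 1 : ℕ) - j' * t + h by ring] at this
    have hleft : ∀ i i' j, i' ≤ i → A i j → A i' j := by
      intro i i' j hii hA
      obtain ⟨n, hn⟩ := Int.eq_ofNat_of_zero_le (sub_nonneg.2 hii)
      have := sub_mul_mem h1 hA n
      rwa [← hn, show i * (2 * h + 1 : ℕ) - j * t + h - (2 * h + 1 : ℕ) * (i - i') =
        i' * (2 * h + 1 : ℕ) - j * t + h by ring] at this
    have hper : ∀ i j k, A (i + t * k) (j + (2 * h + 1 : ℕ) * k) ↔ A i j := by
      intro i j k
      change _ ∈ B ↔ _ ∈ B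
      rw [show (i + t * k) * (2 * h + 1 : ℕ) - (j + (2 * h + 1 : ℕ) * k) * t + h =
        i * (2 * h + 1 : ℕ) - j * t + h by ring]
    have hsymm : ∀ i j, A i j ↔ ¬ A (-1 - i) (-j) := by
      intro i j
      change _ ∈ B ↔ ¬ _ ∈ B
      rw [h3, show -1 - (i * (2 * h + 1 : ℕ) - j * t + h) =
        (-1 - i) * (2 * h + 1 : ℕ) - (-j) * t + h by push_cast; ring]
    have hne : ∀ i, ∃ j, A i j := by
      intro i
      obtain ⟨b, hb⟩ := exists_mem_of_symm h3
      obtain ⟨i', j', rfl⟩ := exists_lattice_eq hst b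
      have h4 := (hper i' j' |i - i'|).2 hb
      refine ⟨_, hleft _ i _ ?_ h4⟩
      have ht1 : (1 : ℤ) ≤ t := by exact_mod_cast ht
      nlinarith [le_abs_self (i - i'), abs_nonneg (i - i')]
    have hbdd : ∀ i, ∃ l, ∀ j, A i j → l ≤ j := by
      intro i
      obtain ⟨j, hj⟩ := hne (-1 - i)
      refine ⟨-j, fun j' hj' => ?_⟩
      by_contra! hlt
      exact (hsymm i j').1 hj' (hup _ j _ (by omega) hj)
    choose g hgA hgmin using fun i => Int.exists_least_of_bdd (hbdd i) (hne i)
    have hgiff : ∀ i j, A i j ↔ g i ≤ j := fun i j => ⟨hgmin i j, fun hle => hup _ _ _ hle (hgA i)⟩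
    have hg : g ∈ symmProfiles (2 * h + 1) t := by
      refine ⟨fun i i' hii => ?_, fun i => ?_, fun i => ?_⟩
      · rw [← hgiff]
        exact hleft _ _ _ hii (hgA i')
      · have h4 : ∀ j, g (i + t) ≤ j + (2 * h + 1 : ℕ) ↔ g i ≤ j := by
          intro j
          have := hper i j 1
          rwa [mul_one, mul_one, hgiff, hgiff] at this
        have h5 := (h4 (g i)).2 le_rfl
        have h6 := (h4 (g (i + t) - (2 * h + 1 : ℕ))).1 (by omega)
        omega
      · have h4 : ∀ j, g i ≤ j ↔ ¬ g (-1 - i) ≤ -j := by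
          intro j
          have := hsymm i j
          rwa [hgiff, hgiff] at this
        have h5 := (h4 (g i)).1 le_rfl
        have h6 := (h4 (g i - 1)).not.1 (by omega)
        omega
    refine ⟨g, hg, ?_⟩
    ext x
    obtain ⟨i, j, rfl⟩ := exists_lattice_eq hst x
    rw [mem_idealOfProfile ht hst hg, ← hgiff]

lemma injOn_idealOfProfile {h t : ℕ} (ht : 0 < t) (hst : Nat.Coprime (2 * h + 1) t) :
    Set.InjOn (idealOfProfile h t) (symmProfiles (2 * h + 1) t) := by
  intro g hg g' hg' he
  have hiff : ∀ i j, g i ≤ j ↔ g' i ≤ j := fun i j => by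
    rw [← mem_idealOfProfile ht hst hg, he, mem_idealOfProfile ht hst hg']
  exact funext fun i => le_antisymm ((hiff i _).2 le_rfl) ((hiff i _).1 le_rfl)

lemma map_reflect {s t : ℕ} {g : ℤ → ℤ} (hg : g ∈ symmProfiles s t) (i : ℤ) :
    g i + g (t - 1 - i) = s + 1 := by
  have h1 := hg.2.1 (-1 - i)
  have h2 := hg.2.2 i
  rw [show -1 - i + (t : ℤ) = t - 1 - i by ring] at h1
  linarith

lemma profile_bounds {h t : ℕ} {g : ℤ → ℤ} (hg : g ∈ symmProfiles (2 * h + 1) t) {i : ℤ}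
    (hi : 0 ≤ i) (hit : i < (t / 2 : ℕ)) : 1 ≤ g i ∧ g i ≤ h + 1 := by
  have h1 := hg.2.2 i
  have h2 := hg.1 (show -1 - i ≤ i by omega)
  have h3 := map_reflect hg i
  have h4 := hg.1 (show i ≤ t - 1 - i by omega)
  push_cast at h3
  omega

lemma profile_ext {s t : ℕ} (ht : 0 < t) {g g' : ℤ → ℤ} (hg : g ∈ symmProfiles s t)
    (hg' : g' ∈ symmProfiles s t) (h : ∀ i : ℕ, i < t / 2 → g i = g' i) : g = g' := by
  have hlow : ∀ r : ℤ, 0 ≤ r → r < (t / 2 : ℕ) → g r = g' r := by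
    intro r h0 h1
    obtain ⟨n, rfl⟩ := Int.eq_ofNat_of_zero_le h0
    exact h n (by exact_mod_cast h1)
  have hbase : ∀ r : ℤ, 0 ≤ r → r < t → g r = g' r := by
    intro r h0 h1
    have h2 := map_reflect hg r
    have h3 := map_reflect hg' r
    by_cases hr : r < (t / 2 : ℕ)
    · exact hlow r h0 hr
    · by_cases hr' : t - 1 - r < (t / 2 : ℕ)
      · have := hlow (t - 1 - r) (by omega) hr'
        linarith
      · rw [show (t : ℤ) - 1 - r = r by omega] at h2 h3
        omega
  funext i
  have ht' : (0 : ℤ) < t := by exact_mod_cast ht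
  rw [← Int.emod_add_mul_ediv i t, map_add_mul_of_map_add hg.2.1, map_add_mul_of_map_add hg'.2.1,
    hbase _ (Int.emod_nonneg _ ht'.ne') (Int.emod_lt_of_pos _ ht')]

lemma exists_profile {h t : ℕ} (ht : 0 < t) {c : ℤ → ℤ}
    (hmono : ∀ i j : ℤ, 0 ≤ i → i ≤ j → j < (t / 2 : ℕ) → c i ≤ c j)
    (hbound : ∀ i : ℤ, 0 ≤ i → i < (t / 2 : ℕ) → 1 ≤ c i ∧ c i ≤ h + 1) :
    ∃ g ∈ symmProfiles (2 * h + 1) t, ∀ i : ℤ, 0 ≤ i → i < (t / 2 : ℕ) → g i = c i := by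
  have ht' : (0 : ℤ) < t := by exact_mod_cast ht
  let G : ℤ → ℤ := fun r => if r < (t / 2 : ℕ) then c r else
    if t - 1 - r < (t / 2 : ℕ) then 2 * h + 2 - c (t - 1 - r) else h + 1
  have hGsymm : ∀ r : ℤ, 0 ≤ r → r < t → G r + G (t - 1 - r) = 2 * h + 2 := by
    intro r h0 h1
    simp only [G]
    rw [show (t : ℤ) - 1 - (t - 1 - r) = r by ring]
    split_ifs <;> omega
  have hGmono : ∀ r : ℤ, 0 ≤ r → r + 1 < t → G r ≤ G (r + 1) := by
    intro r h0 h1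
    simp only [G]
    split_ifs with h2 h3 h4 h5 h6 h7
    · exact hmono _ _ h0 (by omega) h3
    · have := hbound r h0 h2
      have := hbound _ (by omega) h4
      omega
    · exact (hbound r h0 h2).2
    · omega
    · have := hmono (t - 1 - (r + 1)) (t - 1 - r) (by omega) (by omega) h5
      omega
    · omega
    · omega
    · have := hbound (t - 1 - (r + 1)) (by omega) (by assumption)
      omega
    · exact le_rfl
  have hG0 : 1 ≤ G 0 := by
    simp only [G]
    split_ifs with h1 h2
    · exact (hbound 0 le_rfl h1).1
    · omega
    · omega
  let g : ℤ → ℤ := fun i => G (i % t) + (2 * h + 1) * (i / t)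
  have hg : ∀ r k : ℤ, 0 ≤ r → r < t → g (r + t * k) = G r + (2 * h + 1) * k := by
    intro r k h0 h1
    simp only [g]
    rw [Int.add_mul_emod_self_left, Int.emod_eq_of_lt h0 h1, Int.add_mul_ediv_left _ _ ht'.ne',
      Int.ediv_eq_zero_of_lt h0 h1, zero_add]
  have hrep : ∀ i : ℤ, ∃ r k : ℤ, 0 ≤ r ∧ r < t ∧ i = r + t * k := fun i =>
    ⟨i % t, i / t, Int.emod_nonneg _ ht'.ne', Int.emod_lt_of_pos _ ht',
      (Int.emod_add_mul_ediv i t).symm⟩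
  refine ⟨g, ⟨monotone_int_of_le_succ fun i => ?_, fun i => ?_, fun i => ?_⟩, fun i h0 h1 => ?_⟩
  · obtain ⟨r, k, h0, h1, rfl⟩ := hrep i
    by_cases hr : r + 1 < t
    · rw [show r + t * k + 1 = r + 1 + t * k by ring, hg _ _ h0 h1, hg _ _ (by omega) hr]
      have := hGmono r h0 hr
      omega
    · rw [show r + t * k + 1 = 0 + t * (k + 1) by linarith [show r + 1 = t by omega],
        hg _ _ h0 h1, hg _ _ le_rfl ht']
      have := hGsymm r h0 h1
      rw [show (t : ℤ) - 1 - r = 0 by omega] at this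
      linarith
  · obtain ⟨r, k, h0, h1, rfl⟩ := hrep i
    rw [show r + t * k + t = r + t * (k + 1) by ring, hg _ _ h0 h1, hg _ _ h0 h1]
    push_cast
    ring
  · obtain ⟨r, k, h0, h1, rfl⟩ := hrep i
    rw [show -1 - (r + t * k) = t - 1 - r + t * (-1 - k) by ring, hg _ _ h0 h1,
      hg _ _ (by omega) (by omega)]
    linarith [hGsymm r h0 h1]
  · have := hg i 0 h0 (by omega)
    rw [mul_zero, mul_zero, add_zero, add_zero] at this
    rw [this]
    simp only [G]
    rw [if_pos h1]

lemma StrictMono.sub_le_sub_of_le {n m : ℕ} {f : Fin n → Fin m} (hf : StrictMono f) {i j : Fin n}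
    (hij : i ≤ j) : (f i : ℤ) - (i : ℕ) ≤ (f j : ℤ) - (j : ℕ) := by
  have key : ∀ d : ℕ, ∀ hd : (i : ℕ) + d < n, (f i : ℕ) + d ≤ f ⟨i + d, hd⟩ := by
    intro d
    induction d with
    | zero => exact fun _ => le_rfl
    | succ d ih =>
      intro hd
      have h1 := ih (by omega)
      have h2 : f ⟨i + d, by omega⟩ < f ⟨i + (d + 1), hd⟩ :=
        hf (Fin.mk_lt_mk.2 (by omega))
      have h3 := Fin.lt_def.1 h2
      omega
  have hij' : (i : ℕ) ≤ j := hij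
  have h1 := key (j - i) (by omega)
  have h2 : (⟨i + (j - i), by omega⟩ : Fin n) = j := Fin.ext (by simp only; omega)
  rw [h2] at h1
  omega

/-- A profile is recorded by the strictly increasing sequence `g i + i - 1` for `i < t / 2`. -/
def profileEmb {h t : ℕ} (g : symmProfiles (2 * h + 1) t) : Fin (t / 2) ↪o Fin (h + t / 2) :=
  OrderEmbedding.ofStrictMono
    (fun i => ⟨(g.1 (i : ℕ) + (i : ℕ) - 1).toNat, by
      have := profile_bounds g.2 (Int.natCast_nonneg i) (by exact_mod_cast i.2)
      omega⟩)
    (fun i j hij => by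
      have h1 := profile_bounds g.2 (Int.natCast_nonneg i) (by exact_mod_cast i.2)
      have hij' : (i : ℕ) < j := hij
      have h2 := g.2.1 (show ((i : ℕ) : ℤ) ≤ (j : ℕ) by omega)
      rw [Fin.lt_def]
      simp only
      omega)

lemma profileEmb_apply {h t : ℕ} (g : symmProfiles (2 * h + 1) t) (i : Fin (t / 2)) :
    ((profileEmb g i : ℕ) : ℤ) = g.1 (i : ℕ) + (i : ℕ) - 1 := by
  have := profile_bounds g.2 (Int.natCast_nonneg i) (by exact_mod_cast i.2)
  change (((g.1 (i : ℕ) + (i : ℕ) - 1).toNat : ℕ) : ℤ) = _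
  omega

lemma profileEmb_bijective {h t : ℕ} (ht : 0 < t) :
    Function.Bijective (profileEmb : symmProfiles (2 * h + 1) t → _) := by
  constructor
  · intro g g' he
    refine Subtype.ext (profile_ext ht g.2 g'.2 fun i hi => ?_)
    have h1 := profileEmb_apply g ⟨i, hi⟩
    have h2 := profileEmb_apply g' ⟨i, hi⟩
    rw [he] at h1
    simp only at h1 h2
    omega
  · intro e
    let c : ℤ → ℤ := fun i => if hi : i.toNat < t / 2 then (e ⟨i.toNat, hi⟩ : ℤ) - i.toNat + 1 else 0
    have hc : ∀ i : ℕ, ∀ hi : i < t / 2, c i = (e ⟨i, hi⟩ : ℤ) - i + 1 := by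
      intro i hi
      simp only [c, Int.toNat_natCast, dif_pos hi]
    have hmono : ∀ i j : ℤ, 0 ≤ i → i ≤ j → j < (t / 2 : ℕ) → c i ≤ c j := by
      intro i j h0 hij hj
      obtain ⟨i, rfl⟩ := Int.eq_ofNat_of_zero_le h0
      obtain ⟨j, rfl⟩ := Int.eq_ofNat_of_zero_le (h0.trans hij)
      rw [hc i (by omega), hc j (by omega)]
      have := e.strictMono.sub_le_sub_of_le
        (show (⟨i, by omega⟩ : Fin (t / 2)) ≤ ⟨j, by omega⟩ from Fin.mk_le_mk.2 (by omega))
      simp only at this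
      omega
    obtain ⟨g, hg, hgc⟩ := exists_profile (h := h) ht hmono (by
      intro i h0 hi
      obtain ⟨i, rfl⟩ := Int.eq_ofNat_of_zero_le h0
      rw [hc i (by omega)]
      have h1 := e.strictMono.sub_le_sub_of_le
        (show (⟨0, by omega⟩ : Fin (t / 2)) ≤ ⟨i, by omega⟩ from Fin.mk_le_mk.2 (by omega))
      have h2 := e.strictMono.sub_le_sub_of_le
        (show (⟨i, by omega⟩ : Fin (t / 2)) ≤ ⟨t / 2 - 1, by omega⟩ from
          Fin.mk_le_mk.2 (by omega))
      have h3 := (e ⟨t / 2 - 1, by omega⟩).2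
      simp only at h1 h2
      omega)
    refine ⟨⟨g, hg⟩, ?_⟩
    ext i
    have h1 := profileEmb_apply ⟨g, hg⟩ i
    have h2 := hgc (i : ℕ) (by omega) (by exact_mod_cast i.2)
    rw [hc i i.2] at h2
    change _ = g (i : ℕ) + (i : ℕ) - 1 at h1
    rw [Fin.eta] at h2
    omega

lemma ncard_symmProfiles {h t : ℕ} (ht : 0 < t) :
    (symmProfiles (2 * h + 1) t).ncard = (h + t / 2).choose (t / 2) := by
  rw [← Nat.card_coe_set_eq, Nat.card_eq_of_bijective _ (profileEmb_bijective ht),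
    Nat.card_congr Set.powersetCard.ofFinEmbEquiv, Set.powersetCard.card, Nat.card_fin]

lemma ncard_of_odd {s t : ℕ} (hs : Odd s) (ht : 0 < t) (hst : Nat.Coprime s t) :
    Set.ncard {p : Partn | SelfConj p ∧ IsCore s p ∧ IsCore t p} =
      (s / 2 + t / 2).choose (t / 2) := by
  obtain ⟨h, rfl⟩ := hs
  rw [← Set.ncard_image_of_injective _ betaSet_injective, image_betaSet (by omega) ht hst,
    ← image_idealOfProfile ht hst, (injOn_idealOfProfile ht hst).ncard_image,
    ncard_symmProfiles ht, show (2 * h + 1) / 2 = h by omega]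

/-- The number of self-conjugate `(s,t)`-cores is `C(⌊s/2⌋ + ⌊t/2⌋, ⌊s/2⌋)`. -/
theorem count_sc_st_cores (s t : ℕ) (hs : 0 < s) (ht : 0 < t) (hst : Nat.Coprime s t) :
    Set.ncard {p : Partn | SelfConj p ∧ IsCore s p ∧ IsCore t p} =
      (s / 2 + t / 2).choose (s / 2) := by
  rcases Nat.even_or_odd s with hse | hso
  · have hto : Odd t := by
      rw [← Nat.not_even_iff_odd]
      intro hte
      have := Nat.dvd_gcd hse.two_dvd hte.two_dvd
      rw [hst.gcd_eq_one] at this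
      omega
    have := ncard_of_odd hto hs hst.symm
    rw [add_comm] at this
    rw [← this]
    congr 1
    ext p
    exact and_congr_right fun _ => and_comm
  · rw [ncard_of_odd hso ht hst, Nat.choose_symm_add]
end

section
/- Let λ be an s-core, and for each residue class i modulo t let c_i be the number of elements of the s-set S(λ) congruent to i modulo t. Then the order of the stabiliser of λ under the level-t action of W̃_s on the set of s-cores equals the product over i ∈ ℤ/tℤ of c_i!. -/
/-! ### Beta-sets of cores -/

/-- Every integer outside the beta-set comes from a column of the partition. -/
lemma exists_column_of_notMem_betaSet (p : Partn) {y : ℤ} (hy : y ∉ betaSet p) :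
    ∃ c : ℕ, y = (c : ℤ) - conjCount p c := by
  classical
  have hex : ∃ n : ℕ, (p.f n : ℤ) - (n + 1) ≤ y := by
    refine ⟨((p.f 0 : ℤ) - y).toNat, ?_⟩
    have := p.antitone (Nat.zero_le ((p.f 0 : ℤ) - y).toNat)
    omega
  obtain ⟨hn, hmin⟩ := And.intro (Nat.find_spec hex) (fun m => Nat.find_min hex (m := m))
  set n := Nat.find hex
  have hne : (p.f n : ℤ) - (n + 1) ≠ y := fun h => hy ⟨n, h.symm⟩
  have hlt : ∀ m < n, y + n + 1 ≤ p.f m := by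
    intro m hm
    have h1 := hmin (n - 1) (by omega)
    have h2 := p.antitone (show m ≤ n - 1 by omega)
    omega
  refine ⟨(y + n).toNat, ?_⟩
  have hset : {i : ℕ | (y + n).toNat + 1 ≤ p.f i} = (Finset.range n : Set ℕ) := by
    ext i
    simp only [Set.mem_ofPred_eq, Finset.coe_range, Set.mem_Iio]
    constructor
    · intro hi
      by_contra hni
      have := p.antitone (not_lt.mp hni)
      omega
    · intro hi
      have := hlt i hi
      omega
  rw [conjCount, hset, Set.ncard_coe_finset, Finset.card_range]
  omega

lemma conjCount_le_of_le (p : Partn) {r c : ℕ} (h : p.f r ≤ c) : conjCount p c ≤ r := by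
  have hsub : {i : ℕ | c + 1 ≤ p.f i} ⊆ (Finset.range r : Set ℕ) := by
    intro i hi
    simp only [Set.mem_ofPred_eq] at hi
    simp only [Finset.coe_range, Set.mem_Iio]
    by_contra hri
    have := p.antitone (not_lt.mp hri)
    omega
  simpa [conjCount] using Set.ncard_le_ncard hsub (Finset.finite_toSet _)

/-- The beta-set of an `s`-core is closed under subtracting `s`. -/
lemma IsCore.sub_mem_betaSet {s : ℕ} {p : Partn} (hp : IsCore s p) {b : ℤ}
    (hb : b ∈ betaSet p) : b - s ∈ betaSet p := by
  by_contra hy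
  obtain ⟨c, hc⟩ := exists_column_of_notMem_betaSet p hy
  obtain ⟨r, rfl⟩ := hb
  refine hp r c ?_ ⟨1, ?_⟩
  · by_contra hle
    have := conjCount_le_of_le p (not_lt.mp hle)
    omega
  · unfold hookLen
    linarith

lemma IsCore.sub_mul_mem_betaSet {s : ℕ} {p : Partn} (hp : IsCore s p) {b : ℤ}
    (hb : b ∈ betaSet p) (k : ℕ) : b - s * k ∈ betaSet p := by
  induction k with
  | zero => simpa using hb
  | succ k ih =>
    have := hp.sub_mem_betaSet ih
    rwa [show b - s * (k : ℤ) - s = b - s * ((k + 1 : ℕ) : ℤ) by push_cast; ring] at this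

lemma exists_forall_le_mem_betaSet (p : Partn) : ∃ N : ℤ, ∀ b ≤ N, b ∈ betaSet p := by
  obtain ⟨N, hN⟩ := p.eventually_zero
  refine ⟨-(N : ℤ) - 1, fun b hb => ⟨(-b - 1).toNat, ?_⟩⟩
  rw [hN _ (by omega)]
  omega

lemma lt_of_mem_betaSet (p : Partn) {b : ℤ} (hb : b ∈ betaSet p) : b < p.f 0 := by
  obtain ⟨i, rfl⟩ := hb
  have := p.antitone (Nat.zero_le i)
  omega

lemma IsCore.sSet_unique {s : ℕ} {p : Partn} (hs : 0 < s) (hp : IsCore s p) {x y : ℤ}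
    (hx : x ∈ sSet s p) (hy : y ∈ sSet s p) (h : (s : ℤ) ∣ x - y) : x = y := by
  have key : ∀ {x y : ℤ}, x ∈ sSet s p → y ∈ sSet s p → (s : ℤ) ∣ x - y → y ≤ x := by
    intro x y hx hy h
    by_contra hlt
    obtain ⟨k, hk⟩ := h
    have hk0 : k < 0 := by
      by_contra hk0
      have : 0 ≤ (s : ℤ) * k := mul_nonneg (by positivity) (not_lt.mp hk0)
      omega
    refine hx.2 ?_
    have := hp.sub_mul_mem_betaSet hy.1 (-k - 1).toNat
    rwa [Int.toNat_of_nonneg (by omega),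
      show y - s - s * (-k - 1) = x by linear_combination hk.symm] at this
  exact le_antisymm (key hy hx (by rw [← dvd_neg]; simpa using h)) (key hx hy h)

lemma exists_mem_sSet {s : ℕ} {p : Partn} (hs : 0 < s) (n : ℤ) :
    ∃ x ∈ sSet s p, (s : ℤ) ∣ x - n := by
  obtain ⟨N, hN⟩ := exists_forall_le_mem_betaSet p
  have hs' : (1 : ℤ) ≤ s := by exact_mod_cast hs
  have hbdd : ∃ b : ℤ, ∀ z : ℤ, n + z * s ∈ betaSet p → z ≤ b := by
    refine ⟨|(p.f 0 : ℤ) - n|, fun z hz => ?_⟩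
    have h1 := lt_of_mem_betaSet p hz
    by_contra hlt
    have h2 := le_abs_self ((p.f 0 : ℤ) - n)
    have h3 := abs_nonneg ((p.f 0 : ℤ) - n)
    nlinarith
  have hinh : ∃ z : ℤ, n + z * s ∈ betaSet p := by
    refine ⟨-|n - N|, hN _ ?_⟩
    have h2 := le_abs_self (n - N)
    have h3 := abs_nonneg (n - N)
    nlinarith
  obtain ⟨k, hk, hmax⟩ := Int.exists_greatest_of_bdd hbdd hinh
  refine ⟨n + (k + 1) * s, ⟨?_, fun hmem => ?_⟩, ⟨k + 1, by ring⟩⟩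
  · rwa [show n + (k + 1) * (s : ℤ) - s = n + k * s by ring]
  · have := hmax _ hmem
    omega

/-! ### The affine symmetric group is generated by the Coxeter generators -/

/-- The sum of an `s`-periodic function over a window of length `s` does not depend on the
window. -/
lemma sum_Ico_eq_sum_range_of_periodic {s : ℕ} (f : ℤ → ℤ) (hf : ∀ m, f (m + s) = f m) (a : ℤ) :
    ∑ i ∈ Finset.Ico a (a + s), f i = ∑ i ∈ Finset.range s, f i := by
  have hwin : ∀ a : ℤ, ∑ i ∈ Finset.Ico a (a + s), f i = ∑ k ∈ Finset.range s, f (a + k) := by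
    intro a
    refine Finset.sum_nbij' (fun x => (x - a).toNat) (fun k => a + k) ?_ ?_ ?_ ?_ ?_
    · intro x hx
      simp only [Finset.mem_Ico, Finset.mem_range] at *
      omega
    · intro x hx
      simp only [Finset.mem_Ico, Finset.mem_range] at *
      omega
    · intro x hx
      simp only [Finset.mem_Ico] at *
      omega
    · intro x hx
      omega
    · intro x hx
      simp only [Finset.mem_Ico] at hx
      congr 1
      omega
  have hstep : ∀ a : ℤ, ∑ k ∈ Finset.range s, f (a + 1 + k) = ∑ k ∈ Finset.range s, f (a + k) := by
    intro a
    have h1 := Finset.sum_range_succ (fun k : ℕ => f (a + k)) s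
    have h2 := Finset.sum_range_succ' (fun k : ℕ => f (a + k)) s
    have h3 : ∀ k : ℕ, f (a + ((k + 1 : ℕ) : ℤ)) = f (a + 1 + k) := by
      intro k
      congr 1
      push_cast
      ring
    simp only [h3, Nat.cast_zero, add_zero, hf] at h1 h2
    linarith
  rw [hwin]
  induction a using Int.induction_on with
  | zero => simp
  | succ i ih => rw [hstep, ih]
  | pred i ih => rw [← hstep, sub_add_cancel, ih]

lemma sum_range_cast_eq_choose_two (s : ℕ) :
    ∑ i ∈ Finset.range s, (i : ℤ) = (s.choose 2 : ℤ) := by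
  rw [← Nat.cast_sum, Finset.sum_range_id, Nat.choose_two_right]

lemma mem_affSymSet_iff {s : ℕ} {w : Equiv.Perm ℤ} :
    w ∈ AffSymSet s ↔
      (∀ m : ℤ, w (m + s) = w m + s) ∧ ∑ i ∈ Finset.range s, (w (i : ℤ) - i) = 0 := by
  rw [AffSymSet, Set.mem_ofPred_eq, Finset.sum_sub_distrib, sum_range_cast_eq_choose_two,
    sub_eq_zero]

lemma one_mem_affSymSet (s : ℕ) : (1 : Equiv.Perm ℤ) ∈ AffSymSet s :=
  mem_affSymSet_iff.2 ⟨fun _ => rfl, by simp⟩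

lemma genFun_add_period (s : ℕ) (a m : ℤ) : genFun s a (m + s) = genFun s a m + s := by
  have h1 : (s : ℤ) ∣ m + s - a ↔ (s : ℤ) ∣ m - a := by
    rw [show m + s - a = m - a + s by ring, dvd_add_self_right]
  have h2 : (s : ℤ) ∣ m + s - a - 1 ↔ (s : ℤ) ∣ m - a - 1 := by
    rw [show m + s - a - 1 = m - a - 1 + s by ring, dvd_add_self_right]
  unfold genFun
  simp only [h1, h2]
  split_ifs <;> ring

lemma genFun_self (s : ℕ) (a : ℤ) : genFun s a a = a + 1 := by simp [genFun]

lemma genFun_succ (s : ℕ) (hs : 2 ≤ s) (a : ℤ) : genFun s a (a + 1) = a := by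
  rw [← genFun_self s a, genFun_involutive s hs a]

lemma genFun_of_mem_Ico {s : ℕ} {a m : ℤ} (hm : m ∈ Finset.Ico (a + 2) (a + s)) :
    genFun s a m = m := by
  rw [Finset.mem_Ico] at hm
  have h1 : ¬ (s : ℤ) ∣ m - a := fun h => by
    have := Int.le_of_dvd (by omega) h
    omega
  have h2 : ¬ (s : ℤ) ∣ m - a - 1 := fun h => by
    have := Int.le_of_dvd (by omega) h
    omega
  simp [genFun, h1, h2]

lemma sum_Ico_eq_add_add {s : ℕ} (hs : 2 ≤ s) (f : ℤ → ℤ) (a : ℤ) :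
    ∑ i ∈ Finset.Ico a (a + s), f i = f a + f (a + 1) + ∑ i ∈ Finset.Ico (a + 2) (a + s), f i := by
  have h : Finset.Ico a (a + s) = insert a (insert (a + 1) (Finset.Ico (a + 2) (a + s))) := by
    ext x
    simp only [Finset.mem_Ico, Finset.mem_insert]
    omega
  rw [h, Finset.sum_insert, Finset.sum_insert, add_assoc] <;> simp

lemma mul_genPerm_mem_affSymSet {s : ℕ} (hs : 2 ≤ s) {w : Equiv.Perm ℤ} (hw : w ∈ AffSymSet s)
    (a : ℤ) : w * genPerm s hs a ∈ AffSymSet s := by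
  rw [mem_affSymSet_iff] at hw ⊢
  have hper : ∀ m : ℤ, (w * genPerm s hs a) (m + s) = (w * genPerm s hs a) m + s := fun m => by
    change w (genFun s a (m + s)) = w (genFun s a m) + s
    rw [genFun_add_period, hw.1]
  refine ⟨hper, ?_⟩
  have h0 := hw.2
  rw [← sum_Ico_eq_sum_range_of_periodic (fun i => w i - i) (fun m => by simp [hw.1]) a,
    sum_Ico_eq_add_add hs] at h0
  rw [← sum_Ico_eq_sum_range_of_periodic (fun i => (w * genPerm s hs a) i - i)
    (fun m => by rw [hper]; ring) a, sum_Ico_eq_add_add hs]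
  change w (genFun s a a) - a + (w (genFun s a (a + 1)) - (a + 1)) +
    ∑ i ∈ Finset.Ico (a + 2) (a + s), (w (genFun s a i) - i) = 0
  rw [genFun_self, genFun_succ s hs,
    Finset.sum_congr rfl fun i hi => by rw [genFun_of_mem_Ico hi]]
  linarith

lemma genPerm_mem_affSymSet {s : ℕ} (hs : 2 ≤ s) (a : ℤ) : genPerm s hs a ∈ AffSymSet s := by
  simpa using mul_genPerm_mem_affSymSet hs (one_mem_affSymSet s) a

lemma genPerm_mul_self {s : ℕ} (hs : 2 ≤ s) (a : ℤ) : genPerm s hs a * genPerm s hs a = 1 :=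
  Equiv.ext fun m => genFun_involutive s hs a m

/-- The squared displacement of a permutation over one period. -/
def sqDispl (s : ℕ) (w : Equiv.Perm ℤ) : ℤ := ∑ i ∈ Finset.range s, (w (i : ℤ) - i) ^ 2

lemma sqDispl_mul_genPerm {s : ℕ} (hs : 2 ≤ s) {w : Equiv.Perm ℤ} (hw : w ∈ AffSymSet s) (a : ℤ) :
    sqDispl s (w * genPerm s hs a) = sqDispl s w - 2 * (w a - w (a + 1)) := by
  have hper := hw.1
  have hper' := (mul_genPerm_mem_affSymSet hs hw a).1
  unfold sqDispl
  rw [← sum_Ico_eq_sum_range_of_periodic (fun i => (w i - i) ^ 2)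
      (fun m => by rw [hper]; ring) a, sum_Ico_eq_add_add hs,
    ← sum_Ico_eq_sum_range_of_periodic (fun i => ((w * genPerm s hs a) i - i) ^ 2)
      (fun m => by rw [hper']; ring) a, sum_Ico_eq_add_add hs]
  change (w (genFun s a a) - a) ^ 2 + (w (genFun s a (a + 1)) - (a + 1)) ^ 2 +
    ∑ i ∈ Finset.Ico (a + 2) (a + s), (w (genFun s a i) - i) ^ 2 = _
  rw [genFun_self, genFun_succ s hs,
    Finset.sum_congr rfl fun i hi => by rw [genFun_of_mem_Ico hi]]
  ring

lemma eq_one_of_forall_le {s : ℕ} (hs : 0 < s) {w : Equiv.Perm ℤ} (hw : w ∈ AffSymSet s)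
    (h : ∀ a, w a ≤ w (a + 1)) : w = 1 := by
  rw [mem_affSymSet_iff] at hw
  have hlt : ∀ a, w a + 1 ≤ w (a + 1) := fun a => by
    have h1 : w a ≠ w (a + 1) := fun he => by
      have := w.injective he
      omega
    have := h a
    omega
  have hadd : ∀ (a : ℤ) (k : ℕ), w a + k ≤ w (a + k) := by
    intro a k
    induction k with
    | zero => simp
    | succ k ih =>
      have := hlt (a + k)
      push_cast
      rw [← add_assoc a]
      omega
  have heq : ∀ a, w (a + 1) = w a + 1 := fun a => by
    have h1 := hadd (a + 1) (s - 1)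
    have h2 := hlt a
    rw [show a + 1 + ((s - 1 : ℕ) : ℤ) = a + s by omega, hw.1] at h1
    omega
  have htrans : ∀ m, w m = m + w 0 := by
    intro m
    induction m using Int.induction_on with
    | zero => simp
    | succ i ih => rw [heq, ih]; ring
    | pred i ih =>
      have := heq (-(i : ℤ) - 1)
      rw [sub_add_cancel, ih] at this
      linarith
  have h0 := hw.2
  simp only [fun i : ℕ => show w (i : ℤ) - i = w 0 by rw [htrans i]; ring, Finset.sum_const,
    Finset.card_range, nsmul_eq_mul, mul_eq_zero, Nat.cast_eq_zero] at h0
  refine Equiv.ext fun m => ?_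
  rw [htrans, h0.resolve_left hs.ne', add_zero, Equiv.Perm.one_apply]

/-- Induction principle: the affine symmetric group is generated by the Coxeter generators. -/
lemma affSymSet_induction {s : ℕ} (hs : 2 ≤ s) {P : Equiv.Perm ℤ → Prop} (one : P 1)
    (mul_gen : ∀ w ∈ AffSymSet s, ∀ a, P w → P (w * genPerm s hs a)) :
    ∀ w ∈ AffSymSet s, P w := by
  have key : ∀ (n : ℕ) (w : Equiv.Perm ℤ), w ∈ AffSymSet s → sqDispl s w ≤ n → P w := by
    intro n
    induction n with
    | zero =>
      intro w hw hn
      convert one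
      refine eq_one_of_forall_le (by omega) hw fun a => ?_
      by_contra hlt
      have h1 := sqDispl_mul_genPerm hs hw a
      have h2 : 0 ≤ sqDispl s (w * genPerm s hs a) :=
        Finset.sum_nonneg fun i _ => sq_nonneg _
      push_cast at hn
      omega
    | succ n ih =>
      intro w hw hn
      by_cases hdesc : ∀ a, w a ≤ w (a + 1)
      · convert one
        exact eq_one_of_forall_le (by omega) hw hdesc
      · push Not at hdesc
        obtain ⟨a, ha⟩ := hdesc
        have hw' := mul_genPerm_mem_affSymSet hs hw a
        have h1 := sqDispl_mul_genPerm hs hw a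
        have h2 := mul_gen _ hw' a (ih _ hw' (by push_cast at hn; omega))
        rwa [mul_assoc, genPerm_mul_self, mul_one] at h2
  exact fun w hw => key (sqDispl s w).toNat w hw (Int.self_le_toNat _)

/-! ### The level-`t` action -/

/-- Explicit formula for the level-`t` action. -/
lemma IsLevelTAction.apply_eq {s t : ℕ} {hs : 2 ≤ s} (hst : Nat.Coprime s t)
    {Φ : Equiv.Perm ℤ → Equiv.Perm ℤ} (hΦ : IsLevelTAction s t hs Φ) {w : Equiv.Perm ℤ}
    (hw : w ∈ AffSymSet s) {u m : ℤ} (hm : (s : ℤ) ∣ m - (t * u - lc s t)) :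
    Φ w m = m + t * (w u - u) := by
  have hcop : IsCoprime (s : ℤ) (t : ℤ) := Nat.isCoprime_iff_coprime.2 hst
  have hgen : ∀ (a u m : ℤ), (s : ℤ) ∣ m - (t * u - lc s t) →
      Φ (genPerm s hs a) m = m + t * (genPerm s hs a u - u) := by
    intro a u m hm
    have hdvd : ∀ j : ℤ, (s : ℤ) ∣ m - (j * t - lc s t) ↔ (s : ℤ) ∣ u - j := by
      intro j
      rw [show m - (j * t - lc s t) = (m - (t * u - lc s t)) + t * (u - j) by ring,
        dvd_add_right hm]
      exact ⟨hcop.dvd_of_dvd_mul_left, fun h => h.mul_left _⟩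
    have h := hΦ.2 (a + 1) m
    rw [add_sub_cancel_right] at h
    rw [h]
    change _ = m + t * (genFun s a u - u)
    unfold levelGenFun genFun
    simp only [add_sub_cancel_right, hdvd, sub_sub u a 1]
    split_ifs <;> ring
  have hone : Φ 1 = 1 := by
    have := hΦ.1 1 1 (one_mem_affSymSet s) (one_mem_affSymSet s)
    rwa [one_mul, left_eq_mul] at this
  revert u m
  refine affSymSet_induction hs
    (P := fun w => ∀ {u m : ℤ}, (s : ℤ) ∣ m - (t * u - lc s t) → Φ w m = m + t * (w u - u))
    ?_ ?_ w hw
  · intro u m _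
    simp [hone]
  · intro w hw a ih u m hm
    rw [hΦ.1 w _ hw (genPerm_mem_affSymSet hs a), Equiv.Perm.mul_apply, hgen a u m hm,
      ih (u := genPerm s hs a u), Equiv.Perm.mul_apply]
    · ring
    · rwa [show m + t * (genPerm s hs a u - u) - (t * genPerm s hs a u - lc s t)
        = m - (t * u - lc s t) by ring]

/-! ### Indexing the `s`-set by residues -/

/-- The element of the `s`-set congruent to `t * u - c` modulo `s`. -/
noncomputable def sSetElt (s t : ℕ) (hs : 2 ≤ s) (p : Partn) (u : ℤ) : sSet s p :=
  ⟨_, (exists_mem_sSet (p := p) (show 0 < s by omega) (t * u - lc s t)).choose_spec.1⟩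

section sSetElt

variable {s t : ℕ} {hs : 2 ≤ s} {p : Partn}

lemma dvd_sSetElt_sub (u : ℤ) : (s : ℤ) ∣ sSetElt s t hs p u - (t * u - lc s t) :=
  (exists_mem_sSet (p := p) (show 0 < s by omega) (t * u - lc s t)).choose_spec.2

lemma eq_sSetElt (hp : IsCore s p) {u : ℤ} (x : sSet s p)
    (hx : (s : ℤ) ∣ x - (t * u - lc s t)) : x = sSetElt s t hs p u := by
  refine Subtype.ext (hp.sSet_unique (by omega) x.2 (sSetElt s t hs p u).2 ?_)
  have := dvd_sub hx (dvd_sSetElt_sub (t := t) (hs := hs) (p := p) u)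
  rwa [sub_sub_sub_cancel_right] at this

lemma sSetElt_add_period (hp : IsCore s p) (u : ℤ) :
    sSetElt s t hs p (u + s) = sSetElt s t hs p u := by
  refine eq_sSetElt hp _ ?_
  obtain ⟨k, hk⟩ := dvd_sSetElt_sub (t := t) (hs := hs) (p := p) (u + s)
  exact ⟨k + t, by linear_combination hk⟩

lemma sSetElt_bijective (hst : Nat.Coprime s t) (hp : IsCore s p) :
    Function.Bijective fun i : Fin s => sSetElt s t hs p ((i : ℕ) : ℤ) := by
  have hcop : IsCoprime (s : ℤ) (t : ℤ) := Nat.isCoprime_iff_coprime.2 hst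
  constructor
  · intro i j hij
    have h1 := dvd_sSetElt_sub (t := t) (hs := hs) (p := p) ((i : ℕ) : ℤ)
    have h2 := dvd_sSetElt_sub (t := t) (hs := hs) (p := p) ((j : ℕ) : ℤ)
    simp only at hij
    rw [hij] at h1
    have h3 := dvd_sub h2 h1
    rw [sub_sub_sub_cancel_left, sub_sub_sub_cancel_right, ← mul_sub] at h3
    have h4 := hcop.dvd_of_dvd_mul_left h3
    have h5 := Int.eq_zero_of_abs_lt_dvd h4 (by rw [abs_lt]; omega)
    omega
  · intro x
    obtain ⟨a, b, hab⟩ := hcop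
    have hs0 : (s : ℤ) ≠ 0 := by omega
    have hnn := Int.emod_nonneg (b * (x + lc s t)) hs0
    have hlt := Int.emod_lt_of_pos (b * (x + lc s t)) (show (0 : ℤ) < s by omega)
    refine ⟨⟨(b * (x + lc s t) % s).toNat, by omega⟩, (eq_sSetElt hp x ?_).symm⟩
    simp only [Int.toNat_of_nonneg hnn]
    have h := Int.mul_ediv_add_emod (b * (x + lc s t)) s
    exact ⟨a * (x + lc s t) + t * (b * (x + lc s t) / s), by
      linear_combination (-(x : ℤ) - lc s t) * hab - t * h⟩

/-- A permutation of the `s`-set preserving residues modulo `t` moves the indices of its elements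
by this rule. -/
noncomputable def indexMap (t : ℕ) (hs : 2 ≤ s) (σ : Equiv.Perm (sSet s p)) (u : ℤ) : ℤ :=
  u + ((σ (sSetElt s t hs p u) : ℤ) - sSetElt s t hs p u) / t

lemma mul_indexMap_sub {σ : Equiv.Perm (sSet s p)} (hσ : ∀ x, (t : ℤ) ∣ σ x - x) (u : ℤ) :
    (t : ℤ) * (indexMap t hs σ u - u) = σ (sSetElt s t hs p u) - sSetElt s t hs p u := by
  rw [indexMap, add_sub_cancel_left, Int.mul_ediv_cancel' (hσ _)]

lemma sSetElt_indexMap (hp : IsCore s p) {σ : Equiv.Perm (sSet s p)}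
    (hσ : ∀ x, (t : ℤ) ∣ σ x - x) (u : ℤ) :
    sSetElt s t hs p (indexMap t hs σ u) = σ (sSetElt s t hs p u) := by
  refine (eq_sSetElt hp _ ?_).symm
  have h := mul_indexMap_sub (hs := hs) hσ u
  obtain ⟨k, hk⟩ := dvd_sSetElt_sub (t := t) (hs := hs) (p := p) u
  exact ⟨k, by linear_combination hk - h⟩

lemma indexMap_indexMap (ht : 0 < t) (hp : IsCore s p) {σ τ : Equiv.Perm (sSet s p)}
    (hσ : ∀ x, (t : ℤ) ∣ σ x - x) (hτ : ∀ x, (t : ℤ) ∣ τ x - x) (hτσ : ∀ x, τ (σ x) = x) (u : ℤ) :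
    indexMap t hs τ (indexMap t hs σ u) = u := by
  have h1 := mul_indexMap_sub (hs := hs) hσ u
  have h2 := mul_indexMap_sub (hs := hs) hτ (indexMap t hs σ u)
  rw [sSetElt_indexMap hp hσ, hτσ] at h2
  have h3 : (t : ℤ) * (indexMap t hs τ (indexMap t hs σ u) - u) = 0 := by linear_combination h1 + h2
  have h4 := (mul_eq_zero.1 h3).resolve_left (by omega)
  linarith

/-- A permutation of the `s`-set preserving residues modulo `t` is induced by an element of the
affine symmetric group. -/
lemma exists_mem_affSymSet_of_perm (ht : 0 < t) (hst : Nat.Coprime s t) (hp : IsCore s p)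
    {σ : Equiv.Perm (sSet s p)} (hσ : ∀ x, (t : ℤ) ∣ σ x - x) :
    ∃ w ∈ AffSymSet s, ∀ u, (t : ℤ) * (w u - u) =
      σ (sSetElt s t hs p u) - sSetElt s t hs p u := by
  have hσ' : ∀ x, (t : ℤ) ∣ σ.symm x - x := fun x => by
    have := hσ (σ.symm x)
    rw [Equiv.apply_symm_apply] at this
    rwa [← dvd_neg, neg_sub]
  let w : Equiv.Perm ℤ :=
    { toFun := indexMap t hs σ
      invFun := indexMap t hs σ.symm
      left_inv := indexMap_indexMap ht hp hσ hσ' (by simp)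
      right_inv := indexMap_indexMap ht hp hσ' hσ (by simp) }
  have hw : ∀ u, (t : ℤ) * (w u - u) = σ (sSetElt s t hs p u) - sSetElt s t hs p u :=
    mul_indexMap_sub hσ
  refine ⟨w, mem_affSymSet_iff.2 ⟨fun m => ?_, ?_⟩, hw⟩
  · change indexMap t hs σ (m + s) = indexMap t hs σ m + s
    rw [indexMap, indexMap, sSetElt_add_period hp]
    ring
  · have hbij := sSetElt_bijective (hs := hs) hst hp
    let _ : Fintype (sSet s p) := Fintype.ofEquiv _ (Equiv.ofBijective _ hbij)
    have h : (t : ℤ) * ∑ i ∈ Finset.range s, (w (i : ℤ) - i) = 0 := by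
      rw [Finset.mul_sum, Finset.sum_congr rfl fun (i : ℕ) _ => hw i, Finset.sum_range,
        hbij.sum_comp (fun x : sSet s p => (σ x : ℤ) - x), Finset.sum_sub_distrib,
        Equiv.sum_comp σ (fun x : sSet s p => (x : ℤ)), sub_self]
    exact (mul_eq_zero.1 h).resolve_left (by omega)

end sSetElt

/-- The class modulo `t` of an integer. -/
def residue (t : ℕ) (ht : 0 < t) (x : ℤ) : Fin t :=
  ⟨(x % t).toNat, by
    have := Int.emod_lt_of_pos x (show (0 : ℤ) < t by omega)
    omega⟩

lemma residue_eq_iff {t : ℕ} (ht : 0 < t) (x : ℤ) (i : Fin t) :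
    residue t ht x = i ↔ x % t = (i : ℕ) := by
  have := Int.emod_nonneg x (show (t : ℤ) ≠ 0 by omega)
  rw [Fin.ext_iff, residue]
  simp only
  omega

lemma residue_eq_residue_iff {t : ℕ} (ht : 0 < t) (x y : ℤ) :
    residue t ht x = residue t ht y ↔ (t : ℤ) ∣ x - y := by
  have := Int.emod_nonneg y (show (t : ℤ) ≠ 0 by omega)
  rw [residue_eq_iff, residue, Int.toNat_of_nonneg this, eq_comm, ← Int.ModEq, Int.modEq_iff_dvd]

/-- The order of the stabiliser of an `s`-core `λ` under the level `t` action of `W̃_s`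
is `∏_{i ∈ ℤ/tℤ} c_i!`, where `c_i = #(S(λ) ∩ (i + tℤ))`. -/
theorem stab_card (s t : ℕ) (hs : 2 ≤ s) (ht : 0 < t) (hst : Nat.Coprime s t)
    (Φ : Equiv.Perm ℤ → Equiv.Perm ℤ) (hΦ : IsLevelTAction s t hs Φ)
    (p : Partn) (hp : IsCore s p) :
    Nat.card {w : Equiv.Perm ℤ // w ∈ AffSymSet s ∧ ⇑(Φ w) '' sSet s p = sSet s p} =
      ∏ i ∈ Finset.range t, Nat.factorial (Set.ncard {x ∈ sSet s p | x % (t : ℤ) = (i : ℤ)}) := by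
  classical
  have hform := fun {w} (hw : w ∈ AffSymSet s) (u : ℤ) =>
    hΦ.apply_eq hst hw (dvd_sSetElt_sub (t := t) (hs := hs) (p := p) u)
  have hbij := sSetElt_bijective (hs := hs) hst hp
  let _ : Fintype (sSet s p) := Fintype.ofEquiv _ (Equiv.ofBijective _ hbij)
  have hmem : ∀ w : {w : Equiv.Perm ℤ // w ∈ AffSymSet s ∧ ⇑(Φ w) '' sSet s p = sSet s p},
      ∀ x, Φ w x ∈ sSet s p ↔ x ∈ sSet s p := by
    intro w x
    have h := (Φ w).injective.mem_set_image (s := sSet s p) (a := x)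
    rwa [w.2.2] at h
  let f : sSet s p → Fin t := fun x => residue t ht x
  let F : {w : Equiv.Perm ℤ // w ∈ AffSymSet s ∧ ⇑(Φ w) '' sSet s p = sSet s p} →
      {σ : Equiv.Perm (sSet s p) // f ∘ σ = f} := fun w =>
    ⟨(Φ w).subtypePerm (hmem w), by
      funext x
      obtain ⟨i, rfl⟩ := hbij.2 x
      refine (residue_eq_residue_iff ht _ _).2 ⟨w.1 ((i : ℕ) : ℤ) - (i : ℕ), ?_⟩
      change Φ w (sSetElt s t hs p ((i : ℕ) : ℤ)) - _ = _
      rw [hform w.2.1, add_sub_cancel_left]⟩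
  have hF : Function.Bijective F := by
    constructor
    · intro w v hwv
      refine Subtype.ext (Equiv.ext fun u => ?_)
      have h := congrArg (fun σ => ((σ.1 (sSetElt s t hs p u) : sSet s p) : ℤ)) hwv
      change Φ w (sSetElt s t hs p u) = Φ v (sSetElt s t hs p u) at h
      rw [hform w.2.1, hform v.2.1, add_right_inj] at h
      have := mul_left_cancel₀ (by omega) h
      linarith
    · rintro ⟨σ, hσ⟩
      have hσ' : ∀ x, (t : ℤ) ∣ σ x - x := fun x =>
        (residue_eq_residue_iff ht _ _).1 (congrFun hσ x)
      obtain ⟨w, hw, hwσ⟩ := exists_mem_affSymSet_of_perm (hs := hs) ht hst hp hσ'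
      have happ : ∀ x : sSet s p, Φ w x = σ x := by
        intro x
        obtain ⟨i, rfl⟩ := hbij.2 x
        rw [hform hw, hwσ]
        ring
      refine ⟨⟨w, hw, Set.Subset.antisymm ?_ ?_⟩, Subtype.ext (Equiv.ext fun x =>
        Subtype.ext (happ x))⟩
      · rintro _ ⟨x, hx, rfl⟩
        rw [happ ⟨x, hx⟩]
        exact (σ ⟨x, hx⟩).2
      · intro x hx
        refine ⟨(σ.symm ⟨x, hx⟩ : sSet s p), Subtype.coe_prop _, ?_⟩
        rw [happ, Equiv.apply_symm_apply]
  rw [Nat.card_congr (Equiv.ofBijective F hF), Nat.card_eq_fintype_card,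
    DomMulAct.stabilizer_card, Finset.prod_range]
  refine Finset.prod_congr rfl fun i _ => congrArg Nat.factorial ?_
  rw [← Nat.card_eq_fintype_card, ← Nat.card_coe_set_eq]
  refine Nat.card_congr ((Equiv.subtypeEquivRight fun x : sSet s p => residue_eq_iff ht x i).trans
    (Equiv.subtypeSubtypeEquivSubtypeInter (· ∈ sSet s p) fun x => x % (t : ℤ) = (i : ℕ)))
end
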